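/- Fix t > 0 and set r' = 1/√(1+t). The function f(K) = η_K(t)·exp(−2K·μ(r')) is strictly increasing on [1, ∞); moreover f(1) = t·exp(−2μ(r')), f(K) < 1/16 for all K ≥ 1, and f(K) → 1/16 as K → ∞, so f maps [1, ∞) onto [t·exp(−2μ(r')), 1/16). -/

import Mathlib

open Set Filter

/-- Complete elliptic integral of the first kind. -/
noncomputable def ellK (r : ℝ) : ℝ :=
  ∫ θ in (0:ℝ)..(Real.pi / 2), (1 - r ^ 2 * Real.sin θ ^ 2) ^ (-(1/2) : ℝ)

/-- The Grötzsch modulus μ(r) = (π/2)·𝒦'(r)/𝒦(r). -/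
noncomputable def mu (r : ℝ) : ℝ :=
  Real.pi / 2 * ellK (Real.sqrt (1 - r ^ 2)) / ellK r

/-!
In terms of the parameter `m = u²`, the Grötzsch modulus is `M(m) = (π/2) 𝒦(1 - m) / 𝒦(m)`.
Legendre's relation gives `M' = -(π / (2 𝒦))² / (2 m (1 - m))`, so the logarithmic derivative of
`G(m) = (1/m - 1) exp(-2 M(m))` is `((π / (2 𝒦))² - 1) / (m (1 - m))`. It is negative because
`𝒦 > π/2`: thus `G` is strictly decreasing on `(0, 1)`. Since `𝒦(1 - m) + (log m) / 2 → log 4` as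
`m → 0+`, one has `G(m) → exp(-2 log 4) = 1/16`. Finally `f(K) = G(m)` for the unique `m` with
`M(m) = K μ(r')`, and this `m` decreases from `1` to `0` as `K` increases from `0` to `∞`.
-/

open Real Topology MeasureTheory Asymptotics

section Monotone

variable {α β : Type*} [LinearOrder β] [TopologicalSpace β] [OrderClosedTopology β]
  {g : α → β} {a b x : α} {c : β}

lemma lt_of_strictAntiOn_of_tendsto_nhdsGT [LinearOrder α] [TopologicalSpace α] [OrderTopology α]
    [DenselyOrdered α] (hg : StrictAntiOn g (Ioo a b)) (hlim : Tendsto g (𝓝[>] a) (𝓝 c))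
    (hx : x ∈ Ioo a b) : g x < c := by
  obtain ⟨y, hay, hyx⟩ := exists_between hx.1
  have hy : y ∈ Ioo a b := ⟨hay, hyx.trans hx.2⟩
  have : (𝓝[>] a).NeBot := nhdsGT_neBot_of_exists_gt ⟨x, hx.1⟩
  refine (hg hy hx hyx).trans_le (ge_of_tendsto hlim ?_)
  filter_upwards [Ioo_mem_nhdsGT hay] with z hz
  exact (hg ⟨hz.1, hz.2.trans hy.2⟩ hy hz.2).le

lemma image_Ioc_eq_Ico_of_strictAntiOn [ConditionallyCompleteLinearOrder α] [TopologicalSpace α]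
    [OrderTopology α] [DenselyOrdered α] (hg : StrictAntiOn g (Ioo a b))
    (hcont : ContinuousOn g (Ioo a b)) (hlim : Tendsto g (𝓝[>] a) (𝓝 c)) (hx : x ∈ Ioo a b) :
    g '' Ioc a x = Ico (g x) c := by
  have hsub : Ioc a x ⊆ Ioo a b := Ioc_subset_Ioo_right hx.2
  have : (𝓝[>] a).NeBot := nhdsGT_neBot_of_exists_gt ⟨x, hx.1⟩
  refine subset_antisymm ?_ (isPreconnected_Ioc.intermediate_value_Ico (right_mem_Ioc.2 hx.1)
    (le_principal_iff.2 (Ioc_mem_nhdsGT hx.1)) (hcont.mono hsub) hlim)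
  rintro _ ⟨y, hy, rfl⟩
  exact ⟨hg.antitoneOn (hsub hy) hx hy.2, lt_of_strictAntiOn_of_tendsto_nhdsGT hg hlim (hsub hy)⟩

end Monotone

variable {m r : ℝ}

/-- The family `∫₀^{π/2} (1 - m sin² θ)^p dθ` containing the complete elliptic integrals. As usual
in the theory of differential equations for them, the variable is the parameter `m = r²`. -/
noncomputable def ellipticIntegral (p m : ℝ) : ℝ :=
  ∫ θ in (0 : ℝ)..(π / 2), (1 - m * sin θ ^ 2) ^ p

/-- Complete elliptic integral of the first kind, as a function of the parameter `m = r²`. -/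
noncomputable def ellipticK (m : ℝ) : ℝ := ellipticIntegral (-(1 / 2)) m

/-- Complete elliptic integral of the second kind, as a function of the parameter `m = r²`. -/
noncomputable def ellipticE (m : ℝ) : ℝ := ellipticIntegral (1 / 2) m

lemma one_sub_mul_sin_sq_pos (hm : m < 1) (θ : ℝ) : 0 < 1 - m * sin θ ^ 2 := by
  nlinarith [sin_sq_le_one θ, mul_nonneg (sub_nonneg.2 hm.le) (sq_nonneg (sin θ))]

lemma continuous_one_sub_mul_sin_sq_rpow (hm : m < 1) (p : ℝ) :
    Continuous fun θ : ℝ ↦ (1 - m * sin θ ^ 2) ^ p :=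
  Continuous.rpow_const (by fun_prop) fun θ ↦ .inl (one_sub_mul_sin_sq_pos hm θ).ne'

lemma intervalIntegrable_one_sub_mul_sin_sq_rpow (hm : m < 1) (p a b : ℝ) :
    IntervalIntegrable (fun θ : ℝ ↦ (1 - m * sin θ ^ 2) ^ p) volume a b :=
  (continuous_one_sub_mul_sin_sq_rpow hm p).intervalIntegrable a b

lemma hasDerivAt_one_sub_mul_sin_sq (m θ : ℝ) :
    HasDerivAt (fun x ↦ 1 - m * sin x ^ 2) (-(2 * m * (sin θ * cos θ))) θ :=
  ((((hasDerivAt_sin θ).pow 2).const_mul m).const_sub 1).congr_deriv (by simp; ring)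

lemma ellipticIntegral_zero (p : ℝ) : ellipticIntegral p 0 = π / 2 := by
  simp [ellipticIntegral]

lemma ellipticIntegral_pos (p : ℝ) (hm : m < 1) : 0 < ellipticIntegral p m :=
  intervalIntegral.intervalIntegral_pos_of_pos
    (intervalIntegrable_one_sub_mul_sin_sq_rpow hm p 0 (π / 2))
    (fun θ ↦ rpow_pos_of_pos (one_sub_mul_sin_sq_pos hm θ) p) pi_div_two_pos

lemma continuous_ellipticIntegral {p : ℝ} (hp : 0 ≤ p) : Continuous (ellipticIntegral p) :=
  intervalIntegral.continuous_parametric_intervalIntegral_of_continuous'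
    (f := fun m θ ↦ (1 - m * sin θ ^ 2) ^ p)
    (Continuous.rpow_const (by fun_prop) fun _ ↦ .inr hp) _ _

lemma pi_div_two_lt_ellipticK (hm : m ∈ Ioo 0 1) : π / 2 < ellipticK m := by
  have hle (θ : ℝ) : 1 - m * sin θ ^ 2 ≤ 1 :=
    sub_le_self _ (mul_nonneg hm.1.le (sq_nonneg (sin θ)))
  have hlt : ∫ _ in (0 : ℝ)..(π / 2), (1 : ℝ) < ellipticK m := by
    refine intervalIntegral.integral_lt_integral_of_continuousOn_of_le_of_exists_lt pi_div_two_pos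
      continuousOn_const (continuous_one_sub_mul_sin_sq_rpow hm.2 _).continuousOn (fun θ _ ↦ ?_)
      ⟨π / 2, right_mem_Icc.2 pi_div_two_pos.le, ?_⟩
    · exact one_le_rpow_of_pos_of_le_one_of_nonpos (one_sub_mul_sin_sq_pos hm.2 θ) (hle θ)
        (by norm_num)
    · exact one_lt_rpow_of_pos_of_lt_one_of_neg (one_sub_mul_sin_sq_pos hm.2 _)
        (by simp [hm.1]) (by norm_num)
  simpa using hlt

lemma ellipticK_pos (hm : m < 1) : 0 < ellipticK m := ellipticIntegral_pos _ hm

lemma cos_nonneg_of_mem_uIcc_zero_pi_div_two {θ : ℝ} (hθ : θ ∈ uIcc 0 (π / 2)) : 0 ≤ cos θ := by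
  rw [uIcc_of_le pi_div_two_pos.le] at hθ
  exact cos_nonneg_of_neg_pi_div_two_le_of_le (by linarith [hθ.1, pi_pos]) hθ.2

lemma sin_nonneg_of_mem_uIcc_zero_pi_div_two {θ : ℝ} (hθ : θ ∈ uIcc 0 (π / 2)) : 0 ≤ sin θ := by
  rw [uIcc_of_le pi_div_two_pos.le] at hθ
  exact sin_nonneg_of_nonneg_of_le_pi hθ.1 (by linarith [hθ.2, pi_pos])

lemma ellipticE_one : ellipticE 1 = 1 := by
  have hcos : ellipticE 1 = ∫ θ in (0 : ℝ)..(π / 2), cos θ := by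
    refine intervalIntegral.integral_congr fun θ hθ ↦ ?_
    simp only [one_mul]
    rw [← cos_sq', ← sqrt_eq_rpow, sqrt_sq (cos_nonneg_of_mem_uIcc_zero_pi_div_two hθ)]
  simp [hcos]

lemma hasDerivAt_ellipticIntegral_integral (p : ℝ) (hm : m < 1) :
    HasDerivAt (ellipticIntegral p)
      (∫ θ in (0 : ℝ)..(π / 2), -(p * sin θ ^ 2) * (1 - m * sin θ ^ 2) ^ (p - 1)) m := by
  let F' : ℝ → ℝ → ℝ := fun x θ ↦ -(p * sin θ ^ 2) * (1 - x * sin θ ^ 2) ^ (p - 1)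
  obtain ⟨c, hmc, hc⟩ := exists_between hm
  have hF' : ContinuousOn (Function.uncurry F') (Icc (m - 1) c ×ˢ uIcc 0 (π / 2)) := by
    refine ContinuousOn.mul (by fun_prop) (ContinuousOn.rpow_const (by fun_prop) fun x hx ↦ ?_)
    exact .inl (one_sub_mul_sin_sq_pos (hx.1.2.trans_lt hc) x.2).ne'
  obtain ⟨C, hC⟩ := (isCompact_Icc.prod isCompact_uIcc).exists_bound_of_continuousOn hF'
  refine (intervalIntegral.hasDerivAt_integral_of_dominated_loc_of_deriv_le
    (F := fun x θ ↦ (1 - x * sin θ ^ 2) ^ p) (F' := F') (bound := fun _ ↦ C)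
    (Icc_mem_nhds (sub_one_lt m) hmc) ?_ (intervalIntegrable_one_sub_mul_sin_sq_rpow hm p _ _)
    ?_ ?_ intervalIntegrable_const ?_).2
  · filter_upwards [Iio_mem_nhds hm] with x hx
    exact (continuous_one_sub_mul_sin_sq_rpow hx p).aestronglyMeasurable
  · exact (Continuous.mul (by fun_prop)
      (continuous_one_sub_mul_sin_sq_rpow hm (p - 1))).aestronglyMeasurable
  · exact .of_forall fun θ hθ x hx ↦ hC (x, θ) ⟨hx, uIoc_subset_uIcc hθ⟩
  · refine .of_forall fun θ _ x hx ↦ ?_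
    have hbase : HasDerivAt (fun x ↦ 1 - x * sin θ ^ 2) (-(1 * sin θ ^ 2)) x :=
      ((hasDerivAt_id x).mul_const _).const_sub 1
    refine (hbase.rpow_const (p := p)
      (.inl (one_sub_mul_sin_sq_pos (hx.2.trans_lt hc) θ).ne')).congr_deriv ?_
    simp only [F']
    ring

lemma hasDerivAt_ellipticIntegral (p : ℝ) (hm0 : m ≠ 0) (hm : m < 1) :
    HasDerivAt (ellipticIntegral p)
      (p / m * (ellipticIntegral p m - ellipticIntegral (p - 1) m)) m := by
  refine (hasDerivAt_ellipticIntegral_integral p hm).congr_deriv ?_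
  rw [ellipticIntegral, ellipticIntegral, ← intervalIntegral.integral_sub
    (intervalIntegrable_one_sub_mul_sin_sq_rpow hm p _ _)
    (intervalIntegrable_one_sub_mul_sin_sq_rpow hm (p - 1) _ _),
    ← intervalIntegral.integral_const_mul]
  refine intervalIntegral.integral_congr fun θ _ ↦ ?_
  have hb := (one_sub_mul_sin_sq_pos hm θ).ne'
  have hpow := rpow_add_one hb (p - 1)
  rw [sub_add_cancel] at hpow
  simp only [hpow]
  field_simp
  ring

-- The integrand of the left-hand side is the derivative of `m sin θ cos θ (1 - m sin² θ)^q`,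
-- which vanishes at both endpoints.
lemma ellipticIntegral_contiguous (q : ℝ) (hm : m < 1) :
    2 * (q + 1) * ellipticIntegral (q + 1) m - (2 * q + 1) * (2 - m) * ellipticIntegral q m +
      2 * q * (1 - m) * ellipticIntegral (q - 1) m = 0 := by
  have hint := intervalIntegrable_one_sub_mul_sin_sq_rpow hm (a := 0) (b := π / 2)
  have hderiv (θ : ℝ) : HasDerivAt (fun θ ↦ m * (sin θ * cos θ) * (1 - m * sin θ ^ 2) ^ q)
      (2 * (q + 1) * (1 - m * sin θ ^ 2) ^ (q + 1) -
        (2 * q + 1) * (2 - m) * (1 - m * sin θ ^ 2) ^ q +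
        2 * q * (1 - m) * (1 - m * sin θ ^ 2) ^ (q - 1)) θ := by
    have hb := (one_sub_mul_sin_sq_pos hm θ).ne'
    refine ((((hasDerivAt_sin θ).mul (hasDerivAt_cos θ)).const_mul m).mul
      ((hasDerivAt_one_sub_mul_sin_sq m θ).rpow_const (p := q) (.inl hb))).congr_deriv ?_
    simp only [Pi.mul_apply, rpow_add_one hb, rpow_sub_one hb]
    have hcos : cos θ ^ 2 = 1 - sin θ ^ 2 := cos_sq' θ
    field_simp
    ring_nf
    rw [hcos]
    ring
  rw [ellipticIntegral, ellipticIntegral, ellipticIntegral,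
    ← intervalIntegral.integral_const_mul, ← intervalIntegral.integral_const_mul,
    ← intervalIntegral.integral_const_mul,
    ← intervalIntegral.integral_sub ((hint _).const_mul _) ((hint _).const_mul _),
    ← intervalIntegral.integral_add (((hint _).const_mul _).sub ((hint _).const_mul _))
      ((hint _).const_mul _),
    intervalIntegral.integral_eq_sub_of_hasDerivAt (fun θ _ ↦ hderiv θ)
      ((((hint _).const_mul _).sub ((hint _).const_mul _)).add ((hint _).const_mul _))]
  simp

lemma hasDerivAt_ellipticE (hm0 : m ≠ 0) (hm : m < 1) :
    HasDerivAt ellipticE ((ellipticE m - ellipticK m) / (2 * m)) m := by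
  refine (hasDerivAt_ellipticIntegral (1 / 2) hm0 hm).congr_deriv ?_
  rw [show (1 / 2 - 1 : ℝ) = -(1 / 2) by norm_num, ← ellipticE, ← ellipticK]
  field_simp

lemma hasDerivAt_ellipticK (hm0 : m ≠ 0) (hm : m < 1) :
    HasDerivAt ellipticK ((ellipticE m - (1 - m) * ellipticK m) / (2 * m * (1 - m))) m := by
  refine (hasDerivAt_ellipticIntegral (-(1 / 2)) hm0 hm).congr_deriv ?_
  have hcontiguous : (1 - m) * ellipticIntegral (-(1 / 2) - 1) m = ellipticE m := by
    have := ellipticIntegral_contiguous (-(1 / 2)) hm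
    rw [show (-(1 / 2) + 1 : ℝ) = 1 / 2 by norm_num, ← ellipticE] at this
    linear_combination -this
  have hm1 : 1 - m ≠ 0 := by linarith
  rw [← hcontiguous, ← ellipticK]
  field_simp
  ring

lemma hasDerivAt_ellipticE_one_sub (hm0 : 0 < m) (hm1 : m ≠ 1) :
    HasDerivAt (fun x ↦ ellipticE (1 - x))
      (-((ellipticE (1 - m) - ellipticK (1 - m)) / (2 * (1 - m)))) m :=
  ((hasDerivAt_ellipticE (sub_ne_zero.2 hm1.symm) (sub_lt_self 1 hm0)).comp_const_sub 1 m)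

lemma hasDerivAt_ellipticK_one_sub (hm0 : 0 < m) (hm1 : m ≠ 1) :
    HasDerivAt (fun x ↦ ellipticK (1 - x))
      (-((ellipticE (1 - m) - m * ellipticK (1 - m)) / (2 * m * (1 - m)))) m := by
  refine ((hasDerivAt_ellipticK (sub_ne_zero.2 hm1.symm)
    (sub_lt_self 1 hm0)).comp_const_sub 1 m).congr_deriv ?_
  rw [sub_sub_cancel]
  ring

lemma sqrt_one_sub_div_one_add {x : ℝ} (hx : -1 < x) :
    √((1 - x) / (1 + x)) = √(1 - x ^ 2) / (1 + x) := by
  have hx' : 0 < 1 + x := by linarith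
  have hfactor : 1 - x ^ 2 = (1 - x) / (1 + x) * (1 + x) ^ 2 := by field_simp; ring
  rw [hfactor, sqrt_mul' _ (sq_nonneg _), sqrt_sq hx'.le, mul_div_cancel_right₀ _ hx'.ne']

lemma integral_mul_sin_div_sqrt (hr : |r| < 1) :
    ∫ θ in (0 : ℝ)..(π / 2), r * sin θ / √(1 - r ^ 2 * sin θ ^ 2) =
      log (1 + r) - log (1 - r ^ 2) / 2 := by
  have hm : r ^ 2 < 1 := (sq_lt_one_iff_abs_lt_one r).2 hr
  have hpos (θ : ℝ) : 0 < r * cos θ + √(1 - r ^ 2 * sin θ ^ 2) := by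
    have hlt : (r * cos θ) ^ 2 < 1 - r ^ 2 * sin θ ^ 2 := by
      rw [mul_pow, cos_sq']
      linarith
    linarith [neg_sqrt_lt_of_sq_lt hlt]
  have hderiv (θ : ℝ) : HasDerivAt (fun θ ↦ -log (r * cos θ + √(1 - r ^ 2 * sin θ ^ 2)))
      (r * sin θ / √(1 - r ^ 2 * sin θ ^ 2)) θ := by
    have hb := one_sub_mul_sin_sq_pos hm θ
    have hsqrt := (sqrt_pos.2 hb).ne'
    have hsum := (hpos θ).ne'
    refine ((((hasDerivAt_cos θ).const_mul r).add
      ((hasDerivAt_one_sub_mul_sin_sq (r ^ 2) θ).sqrt hb.ne')).log hsum).neg.congr_deriv ?_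
    simp only [Pi.add_apply]
    field_simp [hsqrt]
    ring
  have hcont : Continuous fun θ ↦ r * sin θ / √(1 - r ^ 2 * sin θ ^ 2) :=
    Continuous.div (by fun_prop) (by fun_prop) fun θ ↦
      (sqrt_pos.2 (one_sub_mul_sin_sq_pos hm θ)).ne'
  rw [intervalIntegral.integral_eq_sub_of_hasDerivAt (fun θ _ ↦ hderiv θ)
    (hcont.intervalIntegrable _ _)]
  simp only [cos_pi_div_two, mul_zero, sin_pi_div_two, one_pow, mul_one, zero_add, cos_zero,
    sin_zero, ne_eq, OfNat.ofNat_ne_zero, not_false_eq_true, zero_pow, sub_zero, sqrt_one,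
    sub_neg_eq_add, log_sqrt (sub_nonneg.2 hm.le)]
  ring_nf

-- The logarithmic singularity at `r = 1` is that of the elementary integral of
-- `r sin θ / √(1 - r² sin² θ)`; what remains of the integrand stays bounded by `1` for `r ≥ 0`.
lemma ellipticK_sq (hr : |r| < 1) :
    ellipticK (r ^ 2) = (∫ θ in (0 : ℝ)..(π / 2), √((1 - r * sin θ) / (1 + r * sin θ))) +
      (log (1 + r) - log (1 - r ^ 2) / 2) := by
  have hm : r ^ 2 < 1 := (sq_lt_one_iff_abs_lt_one r).2 hr
  have hneg (θ : ℝ) : -1 < r * sin θ := by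
    have : |r * sin θ| < 1 := by
      rw [abs_mul]
      exact (mul_le_of_le_one_right (abs_nonneg r) (abs_sin_le_one θ)).trans_lt hr
    exact (abs_lt.1 this).1
  have hsqrt (θ : ℝ) : √(1 - r ^ 2 * sin θ ^ 2) ≠ 0 :=
    (sqrt_pos.2 (one_sub_mul_sin_sq_pos hm θ)).ne'
  rw [← integral_mul_sin_div_sqrt hr, ← intervalIntegral.integral_add]
  · refine intervalIntegral.integral_congr fun θ _ ↦ ?_
    have hb := (one_sub_mul_sin_sq_pos hm θ).le
    have hadd : 1 + r * sin θ ≠ 0 := by linarith [hneg θ]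
    have hsq := sq_sqrt hb
    simp only [sqrt_one_sub_div_one_add (hneg θ), mul_pow, rpow_neg hb, ← sqrt_eq_rpow]
    field_simp [hsqrt θ]
    linear_combination -hsq
  · refine (Continuous.sqrt (Continuous.div (by fun_prop) (by fun_prop) fun θ ↦ ?_))
      |>.intervalIntegrable _ _
    linarith [hneg θ]
  · exact (Continuous.div (by fun_prop) (by fun_prop) hsqrt).intervalIntegrable _ _

lemma integral_cos_div_one_add_sin :
    ∫ θ in (0 : ℝ)..(π / 2), cos θ / (1 + sin θ) = log 2 := by
  have hne : ∀ θ ∈ uIcc 0 (π / 2), 1 + sin θ ≠ 0 := fun θ hθ ↦ by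
    linarith [sin_nonneg_of_mem_uIcc_zero_pi_div_two hθ]
  rw [intervalIntegral.integral_eq_sub_of_hasDerivAt
    (fun θ hθ ↦ ((hasDerivAt_sin θ).const_add 1).log (hne θ hθ))
    (ContinuousOn.div (by fun_prop) (by fun_prop) hne).intervalIntegrable]
  norm_num

lemma tendsto_integral_sqrt_one_sub_div_one_add :
    Tendsto (fun r ↦ ∫ θ in (0 : ℝ)..(π / 2), √((1 - r * sin θ) / (1 + r * sin θ)))
      (𝓝[<] 1) (𝓝 (log 2)) := by
  have hlim : ∫ θ in (0 : ℝ)..(π / 2), √((1 - sin θ) / (1 + sin θ)) = log 2 := by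
    rw [← integral_cos_div_one_add_sin]
    refine intervalIntegral.integral_congr fun θ hθ ↦ ?_
    rw [sqrt_one_sub_div_one_add (by linarith [sin_nonneg_of_mem_uIcc_zero_pi_div_two hθ]),
      ← cos_sq', sqrt_sq (cos_nonneg_of_mem_uIcc_zero_pi_div_two hθ)]
  rw [← hlim]
  refine intervalIntegral.tendsto_integral_filter_of_dominated_convergence (fun _ ↦ 1)
    (.of_forall fun _ ↦ (Measurable.sqrt (by fun_prop)).aestronglyMeasurable) ?_
    intervalIntegrable_const (.of_forall fun θ hθ ↦ ?_)
  · filter_upwards [Ioo_mem_nhdsLT one_pos] with r hr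
    refine .of_forall fun θ hθ ↦ ?_
    have hrsin : 0 ≤ r * sin θ :=
      mul_nonneg hr.1.le (sin_nonneg_of_mem_uIcc_zero_pi_div_two (uIoc_subset_uIcc hθ))
    rw [norm_of_nonneg (sqrt_nonneg _), sqrt_le_one, div_le_one (by positivity)]
    linarith
  · have hsin := sin_nonneg_of_mem_uIcc_zero_pi_div_two (uIoc_subset_uIcc hθ)
    have hcont : ContinuousAt (fun r ↦ √((1 - r * sin θ) / (1 + r * sin θ))) 1 :=
      ContinuousAt.sqrt (ContinuousAt.div (by fun_prop) (by fun_prop) (by positivity))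
    simpa using hcont.tendsto.mono_left nhdsWithin_le_nhds

lemma tendsto_ellipticK_one_sub_add_log :
    Tendsto (fun m ↦ ellipticK (1 - m) + log m / 2) (𝓝[>] 0) (𝓝 (log 4)) := by
  have hsqrt : Tendsto (fun m : ℝ ↦ √(1 - m)) (𝓝[>] 0) (𝓝[<] 1) := by
    refine tendsto_nhdsWithin_of_tendsto_nhds_of_eventually_within _ ?_ ?_
    · simpa using (Continuous.tendsto (f := fun m : ℝ ↦ √(1 - m)) (by fun_prop) 0).mono_left
        nhdsWithin_le_nhds
    · filter_upwards [self_mem_nhdsWithin] with m hm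
      exact (sqrt_lt' one_pos).2 (by linarith [mem_Ioi.1 hm])
  have hlog : Tendsto (fun r ↦ log (1 + r)) (𝓝[<] 1) (𝓝 (log 2)) := by
    have hcont : ContinuousAt (fun r ↦ log (1 + r)) 1 := .log (by fun_prop) (by norm_num)
    simpa [one_add_one_eq_two] using hcont.tendsto.mono_left nhdsWithin_le_nhds
  have hlim := (tendsto_integral_sqrt_one_sub_div_one_add.add hlog).comp hsqrt
  rw [← log_mul two_ne_zero two_ne_zero, show (2 : ℝ) * 2 = 4 by norm_num] at hlim
  refine hlim.congr' ?_
  filter_upwards [Ioo_mem_nhdsGT one_pos] with m hm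
  have hr : |√(1 - m)| < 1 := by
    rw [abs_of_nonneg (sqrt_nonneg _), sqrt_lt' one_pos]
    linarith [hm.1]
  have hK := ellipticK_sq hr
  rw [sq_sqrt (sub_nonneg.2 hm.2.le), sub_sub_cancel] at hK
  rw [hK, Function.comp_apply]
  ring

lemma tendsto_mul_ellipticK_one_sub :
    Tendsto (fun m ↦ m * ellipticK (1 - m)) (𝓝[>] 0) (𝓝 0) := by
  have hid : Tendsto (fun m : ℝ ↦ m) (𝓝[>] 0) (𝓝 0) := tendsto_id.mono_left nhdsWithin_le_nhds
  have hlog : Tendsto (fun m : ℝ ↦ m * log m) (𝓝[>] 0) (𝓝 0) := by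
    simpa using (continuous_mul_log.tendsto 0).mono_left nhdsWithin_le_nhds
  have hlim := (hid.mul tendsto_ellipticK_one_sub_add_log).sub (hlog.div_const 2)
  simp only [zero_mul, zero_div, sub_zero] at hlim
  exact hlim.congr fun m ↦ by ring

lemma tendsto_sub_mul_ellipticK_one_sub {F : ℝ → ℝ} (hF : DifferentiableAt ℝ F 0) :
    Tendsto (fun m ↦ (F m - F 0) * ellipticK (1 - m)) (𝓝[>] 0) (𝓝 0) := by
  have hO : (fun m ↦ F m - F 0) =O[𝓝[>] 0] fun m ↦ m := by
    simpa using hF.isBigO_sub.mono nhdsWithin_le_nhds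
  exact (hO.mul (isBigO_refl (fun m ↦ ellipticK (1 - m)) _)).trans_tendsto
    tendsto_mul_ellipticK_one_sub

lemma differentiableAt_ellipticIntegral (p : ℝ) (hm : m < 1) :
    DifferentiableAt ℝ (ellipticIntegral p) m :=
  (hasDerivAt_ellipticIntegral_integral p hm).differentiableAt

lemma tendsto_ellipticK_nhdsGT_zero : Tendsto ellipticK (𝓝[>] 0) (𝓝 (π / 2)) := by
  rw [← ellipticIntegral_zero (-(1 / 2))]
  exact (differentiableAt_ellipticIntegral _ one_pos).continuousAt.tendsto.mono_left
    nhdsWithin_le_nhds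

-- The left-hand side has derivative zero, and tends to `π / 2` as `m → 0+`.
theorem legendre_relation (hm : m ∈ Ioo 0 1) :
    (ellipticE m - ellipticK m) * ellipticK (1 - m) + ellipticE (1 - m) * ellipticK m = π / 2 := by
  let L : ℝ → ℝ := fun x ↦
    (ellipticE x - ellipticK x) * ellipticK (1 - x) + ellipticE (1 - x) * ellipticK x
  have hderiv : ∀ x ∈ Ioo (0 : ℝ) 1, HasDerivAt L 0 x := by
    intro x ⟨hx0, hx1⟩
    have hx1' : 1 - x ≠ 0 := (sub_pos.2 hx1).ne'
    refine ((((hasDerivAt_ellipticE hx0.ne' hx1).sub (hasDerivAt_ellipticK hx0.ne' hx1)).mul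
      (hasDerivAt_ellipticK_one_sub hx0 hx1.ne)).add ((hasDerivAt_ellipticE_one_sub hx0 hx1.ne).mul
      (hasDerivAt_ellipticK hx0.ne' hx1))).congr_deriv ?_
    simp only [Pi.sub_apply]
    field_simp
    ring
  have hconst : ∀ x ∈ Ioo (0 : ℝ) 1, L m = L x := fun x hx ↦
    isOpen_Ioo.is_const_of_deriv_eq_zero isPreconnected_Ioo
      (fun y hy ↦ (hderiv y hy).differentiableAt.differentiableWithinAt)
      (fun y hy ↦ (hderiv y hy).deriv) hm hx
  have hE : Tendsto (fun x ↦ ellipticE (1 - x)) (𝓝[>] 0) (𝓝 1) := by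
    have hcont : Continuous fun x ↦ ellipticE (1 - x) :=
      (continuous_ellipticIntegral (by norm_num)).comp (by fun_prop)
    simpa [ellipticE_one] using (hcont.tendsto 0).mono_left nhdsWithin_le_nhds
  have hEK : Tendsto (fun x ↦ (ellipticE x - ellipticK x) * ellipticK (1 - x)) (𝓝[>] 0) (𝓝 0) := by
    have hdiff := tendsto_sub_mul_ellipticK_one_sub
      ((differentiableAt_ellipticIntegral (1 / 2) one_pos).sub
        (differentiableAt_ellipticIntegral (-(1 / 2)) one_pos))
    simp only [Pi.sub_apply, ellipticIntegral_zero, sub_self, sub_zero] at hdiff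
    exact hdiff
  have hlim : Tendsto L (𝓝[>] 0) (𝓝 (π / 2)) := by
    simpa only [zero_add, one_mul] using hEK.add (hE.mul tendsto_ellipticK_nhdsGT_zero)
  exact tendsto_nhds_unique
    (tendsto_const_nhds.congr' (eventually_of_mem (Ioo_mem_nhdsGT one_pos) hconst)) hlim

/-- The Grötzsch modulus as a function of the parameter `m = r²`: `mu r = grotzschModulus (r ^ 2)`
for `r ∈ [-1, 1]`. -/
noncomputable def grotzschModulus (m : ℝ) : ℝ := π / 2 * ellipticK (1 - m) / ellipticK m

lemma mu_sqrt (hm : m ∈ Icc 0 1) : mu √m = grotzschModulus m := by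
  have hsq : √(1 - m) ^ 2 = 1 - m := sq_sqrt (sub_nonneg.2 hm.2)
  rw [mu, ellK, ellK, sq_sqrt hm.1, hsq]
  rfl

lemma grotzschModulus_pos (hm : m ∈ Ioo 0 1) : 0 < grotzschModulus m :=
  div_pos (mul_pos pi_div_two_pos (ellipticK_pos (sub_lt_self 1 hm.1))) (ellipticK_pos hm.2)

lemma grotzschModulus_one_sub (hm : m ∈ Ioo 0 1) :
    grotzschModulus (1 - m) = (π / 2) ^ 2 / grotzschModulus m := by
  have hK := ellipticK_pos hm.2
  have hK' := ellipticK_pos (sub_lt_self 1 hm.1)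
  rw [grotzschModulus, grotzschModulus, sub_sub_cancel]
  field_simp

lemma hasDerivAt_grotzschModulus (hm : m ∈ Ioo 0 1) :
    HasDerivAt grotzschModulus (-((π / 2 / ellipticK m) ^ 2 / (2 * m * (1 - m)))) m := by
  have hK := (ellipticK_pos hm.2).ne'
  have hm0 := hm.1.ne'
  have hm1 : 1 - m ≠ 0 := (sub_pos.2 hm.2).ne'
  refine (((hasDerivAt_ellipticK_one_sub hm.1 hm.2.ne).const_mul (π / 2)).div
    (hasDerivAt_ellipticK hm0 hm.2) hK).congr_deriv ?_
  field_simp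
  linear_combination -2 * legendre_relation hm

lemma continuousOn_grotzschModulus : ContinuousOn grotzschModulus (Ioo 0 1) :=
  fun _ hm ↦ (hasDerivAt_grotzschModulus hm).continuousAt.continuousWithinAt

lemma strictAntiOn_grotzschModulus : StrictAntiOn grotzschModulus (Ioo 0 1) := by
  refine strictAntiOn_of_deriv_neg (convex_Ioo 0 1) continuousOn_grotzschModulus fun m hm ↦ ?_
  rw [interior_Ioo] at hm
  rw [(hasDerivAt_grotzschModulus hm).deriv, neg_lt_zero]
  have hK := ellipticK_pos hm.2
  have hm0 := hm.1
  have hm1 : 0 < 1 - m := sub_pos.2 hm.2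
  positivity

lemma tendsto_grotzschModulus_add_log :
    Tendsto (fun m ↦ grotzschModulus m + log m / 2) (𝓝[>] 0) (𝓝 (log 4)) := by
  have hdiff : Tendsto (fun m ↦ (ellipticK m - π / 2) * ellipticK (1 - m)) (𝓝[>] 0) (𝓝 0) := by
    rw [← ellipticIntegral_zero (-(1 / 2))]
    exact tendsto_sub_mul_ellipticK_one_sub (differentiableAt_ellipticIntegral _ one_pos)
  have hlim := tendsto_ellipticK_one_sub_add_log.sub
    (hdiff.div tendsto_ellipticK_nhdsGT_zero pi_div_two_pos.ne')
  rw [zero_div, sub_zero] at hlim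
  refine hlim.congr' ?_
  filter_upwards [Ioo_mem_nhdsGT one_pos] with m hm
  have hK := (ellipticK_pos hm.2).ne'
  simp only [Pi.div_apply, grotzschModulus]
  field_simp
  ring

lemma tendsto_grotzschModulus_atTop : Tendsto grotzschModulus (𝓝[>] 0) atTop :=
  (tendsto_grotzschModulus_add_log.add_atTop ((tendsto_neg_atBot_atTop.comp
    tendsto_log_nhdsGT_zero).atTop_div_const two_pos)).congr fun m ↦ by
      simp only [Function.comp_apply]
      ring

lemma tendsto_grotzschModulus_nhdsLT_one : Tendsto grotzschModulus (𝓝[<] 1) (𝓝 0) := by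
  have hsub : Tendsto (fun m : ℝ ↦ 1 - m) (𝓝[<] 1) (𝓝[>] 0) := by
    refine tendsto_nhdsWithin_of_tendsto_nhds_of_eventually_within _ ?_ ?_
    · simpa using (Continuous.tendsto (f := fun m : ℝ ↦ 1 - m) (by fun_prop) 1).mono_left
        nhdsWithin_le_nhds
    · filter_upwards [self_mem_nhdsWithin] with m hm using sub_pos.2 (mem_Iio.1 hm)
  refine ((tendsto_grotzschModulus_atTop.comp hsub).const_div_atTop ((π / 2) ^ 2)).congr' ?_
  filter_upwards [Ioo_mem_nhdsLT one_pos] with m hm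
  rw [Function.comp_apply, grotzschModulus_one_sub hm, div_div_cancel₀ (by positivity)]

lemma bijOn_grotzschModulus : BijOn grotzschModulus (Ioo 0 1) (Ioi 0) :=
  ⟨fun _ ↦ grotzschModulus_pos, strictAntiOn_grotzschModulus.injOn,
    isPreconnected_Ioo.intermediate_value_Ioi
      (le_principal_iff.2 (Ioo_mem_nhdsLT one_pos)) (le_principal_iff.2 (Ioo_mem_nhdsGT one_pos))
      continuousOn_grotzschModulus tendsto_grotzschModulus_nhdsLT_one
      tendsto_grotzschModulus_atTop⟩

/-- The inverse `(0, ∞) → (0, 1)` of `grotzschModulus`; its values outside `(0, ∞)` are junk. -/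
noncomputable def grotzschInv : ℝ → ℝ := Function.invFunOn grotzschModulus (Ioo 0 1)

lemma invOn_grotzschInv : InvOn grotzschInv grotzschModulus (Ioo 0 1) (Ioi 0) :=
  bijOn_grotzschModulus.invOn_invFunOn

lemma grotzschInv_mem {x : ℝ} (hx : 0 < x) : grotzschInv x ∈ Ioo 0 1 :=
  Function.invFunOn_mem (bijOn_grotzschModulus.surjOn hx)

lemma grotzschModulus_grotzschInv {x : ℝ} (hx : 0 < x) : grotzschModulus (grotzschInv x) = x :=
  invOn_grotzschInv.2 hx

lemma strictAntiOn_grotzschInv : StrictAntiOn grotzschInv (Ioi 0) := fun x hx y hy hxy ↦ by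
  rwa [← strictAntiOn_grotzschModulus.lt_iff_gt (grotzschInv_mem hx) (grotzschInv_mem hy),
    grotzschModulus_grotzschInv hx, grotzschModulus_grotzschInv hy]

lemma grotzschInv_image_Ici {x : ℝ} (hx : 0 < x) :
    grotzschInv '' Ici x = Ioc 0 (grotzschInv x) := by
  refine subset_antisymm ?_ fun m hm ↦ ?_
  · rintro _ ⟨y, hxy, rfl⟩
    have hy : 0 < y := hx.trans_le hxy
    exact ⟨(grotzschInv_mem hy).1, strictAntiOn_grotzschInv.antitoneOn hx hy hxy⟩
  · have hm' : m ∈ Ioo 0 1 := ⟨hm.1, hm.2.trans_lt (grotzschInv_mem hx).2⟩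
    refine ⟨grotzschModulus m, ?_, invOn_grotzschInv.1 hm'⟩
    rw [mem_Ici, ← grotzschModulus_grotzschInv hx]
    exact strictAntiOn_grotzschModulus.antitoneOn hm' (grotzschInv_mem hx) hm.2

lemma tendsto_grotzschInv_atTop : Tendsto grotzschInv atTop (𝓝[>] 0) := by
  refine (nhdsGT_basis 0).tendsto_right_iff.2 fun ε hε ↦ ?_
  have hε' : min ε (1 / 2) ∈ Ioo (0 : ℝ) 1 := ⟨by positivity, min_lt_of_right_lt (by norm_num)⟩
  filter_upwards [eventually_gt_atTop (grotzschModulus (min ε (1 / 2)))] with x hx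
  have hx0 : 0 < x := (grotzschModulus_pos hε').trans hx
  have hlt := strictAntiOn_grotzschInv (grotzschModulus_pos hε') hx0 hx
  rw [invOn_grotzschInv.1 hε'] at hlt
  exact ⟨(grotzschInv_mem hx0).1, hlt.trans_le (min_le_left _ _)⟩

/-- With `u = √m`, the paper's quantity `(1 / u² - 1) exp (-2 μ(u))`, i.e. `η_K(t) exp (-2 K μ(r'))`
at the `K` for which `μ(u) = K μ(r')`. -/
noncomputable def scaledEta (m : ℝ) : ℝ := (1 / m - 1) * exp (-(2 * grotzschModulus m))

lemma hasDerivAt_scaledEta (hm : m ∈ Ioo 0 1) :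
    HasDerivAt scaledEta
      (-(1 / m ^ 2 * (1 - (π / 2 / ellipticK m) ^ 2) * exp (-(2 * grotzschModulus m)))) m := by
  have hm0 := hm.1.ne'
  have hm1 : 1 - m ≠ 0 := (sub_pos.2 hm.2).ne'
  have hinv : HasDerivAt (fun m : ℝ ↦ 1 / m - 1) (-(1 / m ^ 2)) m := by
    simpa using (hasDerivAt_inv hm0).sub_const 1
  refine (hinv.mul ((hasDerivAt_grotzschModulus hm).const_mul 2).neg.exp).congr_deriv ?_
  simp only [Pi.neg_apply]
  field_simp
  ring

lemma continuousOn_scaledEta : ContinuousOn scaledEta (Ioo 0 1) :=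
  fun _ hm ↦ (hasDerivAt_scaledEta hm).continuousAt.continuousWithinAt

lemma strictAntiOn_scaledEta : StrictAntiOn scaledEta (Ioo 0 1) := by
  refine strictAntiOn_of_deriv_neg (convex_Ioo 0 1) continuousOn_scaledEta fun m hm ↦ ?_
  rw [interior_Ioo] at hm
  rw [(hasDerivAt_scaledEta hm).deriv, neg_lt_zero]
  have hm0 := hm.1
  have hK := ellipticK_pos hm.2
  have hratio : π / 2 / ellipticK m < 1 := (div_lt_one hK).2 (pi_div_two_lt_ellipticK hm)
  have hfactor : 0 < 1 - (π / 2 / ellipticK m) ^ 2 :=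
    sub_pos.2 (pow_lt_one₀ (by positivity) hratio two_ne_zero)
  positivity

lemma tendsto_scaledEta : Tendsto scaledEta (𝓝[>] 0) (𝓝 (1 / 16)) := by
  have hsub : Tendsto (fun m : ℝ ↦ 1 - m) (𝓝[>] 0) (𝓝 1) := by
    simpa using (Continuous.tendsto (f := fun m : ℝ ↦ 1 - m) (by fun_prop) 0).mono_left
      nhdsWithin_le_nhds
  have hlim := hsub.mul ((continuous_exp.tendsto _).comp
    (tendsto_grotzschModulus_add_log.const_mul (-2)))
  have hval : 1 * exp (-2 * log 4) = 1 / 16 := by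
    rw [one_mul, mul_comm, ← rpow_def_of_pos (by norm_num)]
    norm_num [rpow_neg]
  rw [hval] at hlim
  refine hlim.congr' ?_
  filter_upwards [self_mem_nhdsWithin] with m hm
  have hm0 : m ≠ 0 := (mem_Ioi.1 hm).ne'
  have hexp : exp (-2 * (grotzschModulus m + log m / 2)) =
      exp (-(2 * grotzschModulus m)) / m := by
    rw [show -2 * (grotzschModulus m + log m / 2) = -(2 * grotzschModulus m) - log m by ring,
      exp_sub, exp_log hm]
  rw [Function.comp_apply, hexp, scaledEta]
  field_simp

lemma scaledEta_lt (hm : m ∈ Ioo 0 1) : scaledEta m < 1 / 16 :=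
  lt_of_strictAntiOn_of_tendsto_nhdsGT strictAntiOn_scaledEta tendsto_scaledEta hm

lemma strictMonoOn_scaledEta_grotzschInv :
    StrictMonoOn (scaledEta ∘ grotzschInv) (Ioi 0) :=
  strictAntiOn_scaledEta.comp strictAntiOn_grotzschInv fun _ ↦ grotzschInv_mem

lemma scaledEta_grotzschInv_image_Ici {x : ℝ} (hx : 0 < x) :
    (scaledEta ∘ grotzschInv) '' Ici x = Ico (scaledEta (grotzschInv x)) (1 / 16) := by
  rw [image_comp, grotzschInv_image_Ici hx, image_Ioc_eq_Ico_of_strictAntiOn strictAntiOn_scaledEta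
    continuousOn_scaledEta tendsto_scaledEta (grotzschInv_mem hx)]

lemma one_div_one_add_mem_Ioo {t : ℝ} (ht : 0 < t) : 1 / (1 + t) ∈ Ioo (0 : ℝ) 1 :=
  ⟨by positivity, (div_lt_one (by positivity)).2 (by linarith)⟩

lemma mu_one_div_sqrt_one_add {t : ℝ} (ht : 0 < t) :
    mu (1 / √(1 + t)) = grotzschModulus (1 / (1 + t)) := by
  rw [← mu_sqrt (Ioo_subset_Icc_self (one_div_one_add_mem_Ioo ht)), sqrt_div zero_le_one, sqrt_one]

lemma scaledEta_one_div_one_add (t : ℝ) :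
    scaledEta (1 / (1 + t)) = t * exp (-(2 * grotzschModulus (1 / (1 + t)))) := by
  rw [scaledEta, one_div_one_div, add_sub_cancel_left]

lemma mul_exp_eq_scaledEta_grotzschInv {x e : ℝ} (hx : 0 < x)
    (he : ∀ u ∈ Ioo (0 : ℝ) 1, mu u = x → e = 1 / u ^ 2 - 1) :
    e * exp (-(2 * x)) = scaledEta (grotzschInv x) := by
  have hm := grotzschInv_mem hx
  have hu : √(grotzschInv x) ∈ Ioo 0 1 :=
    ⟨sqrt_pos.2 hm.1, (sqrt_lt' one_pos).2 (by simpa using hm.2)⟩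
  have hmu : mu √(grotzschInv x) = x := by
    rw [mu_sqrt (Ioo_subset_Icc_self hm), grotzschModulus_grotzschInv hx]
  rw [he _ hu hmu, sq_sqrt hm.1.le, scaledEta, grotzschModulus_grotzschInv hx]

theorem stmt_10_general (eta : ℝ → ℝ → ℝ)
    (heta : ∀ K t : ℝ, 0 < K → 0 < t → ∀ u ∈ Ioo (0 : ℝ) 1,
      mu u = K * mu (1 / √(1 + t)) → eta K t = 1 / u ^ 2 - 1)
    (t : ℝ) (ht : 0 < t) (f : ℝ → ℝ)
    (hf : f = fun K : ℝ ↦ eta K t * exp (-(2 * K * mu (1 / √(1 + t))))) :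
    StrictMonoOn f (Ioi 0) ∧
    f 1 = t * exp (-(2 * mu (1 / √(1 + t)))) ∧
    (∀ K : ℝ, 0 < K → f K < 1 / 16) ∧
    Tendsto f atTop (𝓝 (1 / 16)) ∧
    ∀ K : ℝ, 0 < K → f '' Ici K = Ico (f K) (1 / 16) := by
  set c := mu (1 / √(1 + t)) with hc
  rw [mu_one_div_sqrt_one_add ht] at hc
  have hm := one_div_one_add_mem_Ioo ht
  have hc0 : 0 < c := hc ▸ grotzschModulus_pos hm
  have hfG : ∀ K, 0 < K → f K = (scaledEta ∘ grotzschInv) (K * c) := fun K hK ↦ by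
    simp only [hf, mul_assoc]
    exact mul_exp_eq_scaledEta_grotzschInv (mul_pos hK hc0) (heta K t hK ht)
  refine ⟨fun K hK L hL hKL ↦ ?_, ?_, fun K hK ↦ ?_, ?_, fun K hK ↦ ?_⟩
  · rw [hfG K hK, hfG L hL]
    exact strictMonoOn_scaledEta_grotzschInv (mul_pos hK hc0) (mul_pos hL hc0)
      (mul_lt_mul_of_pos_right hKL hc0)
  · rw [hfG 1 one_pos, one_mul, Function.comp_apply, hc, invOn_grotzschInv.1 hm,
      scaledEta_one_div_one_add]
  · rw [hfG K hK]
    exact scaledEta_lt (grotzschInv_mem (mul_pos hK hc0))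
  · refine ((tendsto_scaledEta.comp tendsto_grotzschInv_atTop).comp
      (tendsto_id.atTop_mul_const hc0)).congr' ?_
    filter_upwards [eventually_gt_atTop 0] with K hK using (hfG K hK).symm
  · have hmul : (· * c) '' Ici K = Ici (K * c) := (OrderIso.mulRight₀ c hc0).image_Ici K
    rw [image_congr fun L (hL : L ∈ Ici K) ↦ hfG L (hK.trans_le hL), hfG K hK,
      ← image_image (scaledEta ∘ grotzschInv) (· * c), hmul]
    exact scaledEta_grotzschInv_image_Ici (mul_pos hK hc0)

theorem stmt_10 (eta : ℝ → ℝ → ℝ)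
    (heta : ∀ K t : ℝ, 0 < K → 0 < t → ∀ u ∈ Set.Ioo (0:ℝ) 1,
      mu u = K * mu (1 / Real.sqrt (1 + t)) → eta K t = 1 / u ^ 2 - 1) (t : ℝ) (ht : 0 < t) (f : ℝ → ℝ)
    (hf : f = fun K : ℝ => eta K t * Real.exp (-(2 * K * mu (1 / Real.sqrt (1 + t))))) :
    StrictMonoOn f (Set.Ici 1) ∧
    f 1 = t * Real.exp (-(2 * mu (1 / Real.sqrt (1 + t)))) ∧
    (∀ K : ℝ, 1 ≤ K → f K < 1 / 16) ∧
    Filter.Tendsto f Filter.atTop (nhds (1 / 16)) ∧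
    f '' Set.Ici 1 = Set.Ico (t * Real.exp (-(2 * mu (1 / Real.sqrt (1 + t))))) (1 / 16) := by
  obtain ⟨hmono, hone, hlt, hlim, himage⟩ := stmt_10_general eta heta t ht f hf
  exact ⟨hmono.mono (Ici_subset_Ioi.2 one_pos), hone, fun K hK ↦ hlt K (one_pos.trans_le hK), hlim,
    hone ▸ himage 1 one_pos⟩
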